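/- Let L be a positive definite 𝒪-lattice of rank two that contains a 6-vector z and is spanned as an 𝒪-module by z together with the 3-vectors of L. Then there is an 𝒪-basis (e₁, e₂) of L such that exactly one of the following holds: (δ₆) z = e₁ + e₂ and the Gram matrix of ψ is [[3, θ],[−θ, 3]] (discriminant 6); (δ₉) z = e₁ + e₂ and the Gram matrix is [[3, 0],[0, 3]] (discriminant 9); (δ₁₅) z = e₁ and the Gram matrix is [[6, θ],[−θ, 3]] (discriminant 15); (δ₁₈) z = e₁ and the Gram matrix is [[6, 0],[0, 3]] (discriminant 18). Moreover, if M is an 𝒪-lattice of rank two containing L as a proper 𝒪-submodule with the same Hermitian form, then L is of type δ₁₈ and M is isomorphic as an 𝒪-lattice to the lattice of type δ₆. -/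

import Mathlib

open Polynomial

noncomputable section

/-- The Eisenstein ring `𝒪 = ℤ[ω]`, where `ω = e^{2πi/6}` is a primitive sixth root of
unity (so `ω² - ω + 1 = 0`), presented as `ℤ[X]/(X² - X + 1)`. -/
abbrev O : Type := AdjoinRoot (X ^ 2 - X + 1 : ℤ[X])

/-- `ω`, the distinguished primitive sixth root of unity in `𝒪`. -/
def ω : O := AdjoinRoot.root _

lemma ω_sq : ω ^ 2 - ω + 1 = 0 := by
  have h := AdjoinRoot.eval₂_root (X ^ 2 - X + 1 : ℤ[X])
  simpa [ω, eval₂_add, eval₂_sub, eval₂_pow, eval₂_X, eval₂_one] using h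

/-- Complex conjugation on the Eisenstein ring: the ring involution with
`conj ω = 1 - ω = ω⁻¹`. -/
def conj : O →+* O :=
  AdjoinRoot.lift (algebraMap ℤ O) (1 - ω) (by
    have h := ω_sq
    simp only [eval₂_add, eval₂_sub, eval₂_pow, eval₂_X, eval₂_one]
    ring_nf
    ring_nf at h
    linear_combination h)

/-- `θ := ω - ω⁻¹ = ω - conj ω = 2ω - 1`, a square root of `-3` in `𝒪`. -/
def θ : O := ω - conj ω

namespace Eis

lemma conj_ω : conj ω = 1 - ω := by
  simp [conj, ω, AdjoinRoot.lift_root]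

lemma θ_eq : θ = 2 * ω - 1 := by rw [θ, conj_ω]; ring

lemma conj_θ : conj θ = -θ := by
  rw [θ_eq]; simp only [map_sub, map_mul, map_ofNat, map_one, conj_ω]; ring

lemma θ_sq : θ * θ = -3 := by
  rw [θ_eq]; linear_combination 4 * ω_sq

def φ : O →+* ℂ :=
  AdjoinRoot.lift (Int.castRingHom ℂ) ⟨1/2, Real.sqrt 3 / 2⟩ (by
    have h3 : Real.sqrt 3 * Real.sqrt 3 = 3 := Real.mul_self_sqrt (by norm_num)
    simp only [eval₂_add, eval₂_sub, eval₂_pow, eval₂_X, eval₂_one]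
    apply Complex.ext
    · simp [pow_two]; nlinarith
    · simp [pow_two]; ring)

lemma φ_ω : φ ω = ⟨1/2, Real.sqrt 3 / 2⟩ := by
  simp [φ, ω, AdjoinRoot.lift_root]

lemma rep (c : O) : ∃ a b : ℤ, c = a + b * ω := by
  induction c using AdjoinRoot.induction_on with
  | ih p =>
    induction p using Polynomial.induction_on' with
    | add p q hp hq =>
      obtain ⟨a, b, h⟩ := hp
      obtain ⟨a', b', h'⟩ := hq
      refine ⟨a + a', b + b', ?_⟩
      rw [map_add, h, h']; push_cast; ring
    | monomial n r =>
      have key : ∀ n : ℕ, ∃ a b : ℤ, ω ^ n = a + b * ω := by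
        intro n
        induction n with
        | zero => exact ⟨1, 0, by simp⟩
        | succ k ih =>
          obtain ⟨a, b, h⟩ := ih
          refine ⟨-b, a + b, ?_⟩
          rw [pow_succ, h]; push_cast
          linear_combination (b : O) * ω_sq
      obtain ⟨a, b, h⟩ := key n
      refine ⟨r * a, r * b, ?_⟩
      rw [← Polynomial.C_mul_X_pow_eq_monomial, map_mul, map_pow, AdjoinRoot.mk_X]
      change _ * ω ^ n = _
      rw [h]
      have : (AdjoinRoot.mk (X ^ 2 - X + 1 : ℤ[X])) (C r) = (r : O) := by simp
      rw [this]; push_cast; ring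

lemma φ_rep (a b : ℤ) (h : φ (a + b * ω) = 0) : a = 0 ∧ b = 0 := by
  rw [map_add, map_mul, φ_ω, map_intCast, map_intCast] at h
  have h1 := congrArg Complex.re h
  have h2 := congrArg Complex.im h
  simp at h1 h2
  subst h2
  simpa using h1

lemma φ_inj : Function.Injective φ := by
  rw [injective_iff_map_eq_zero]
  intro c hc
  obtain ⟨a, b, rfl⟩ := rep c
  obtain ⟨rfl, rfl⟩ := φ_rep a b hc
  simp

instance : IsDomain O := φ_inj.isDomain φ

instance : CharZero O := by
  refine ⟨fun a b h => ?_⟩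
  have := congrArg φ h
  simpa using this

lemma inj {a b a' b' : ℤ} (h : (a : O) + b * ω = a' + b' * ω) : a = a' ∧ b = b' := by
  have := φ_rep (a - a') (b - b') (by
    have : ((a - a' : ℤ) : O) + ((b - b' : ℤ) : O) * ω = 0 := by
      push_cast; linear_combination h
    rw [this, map_zero])
  omega

lemma conj_rep (a b : ℤ) : conj ((a : O) + b * ω) = (a + b : ℤ) + (-b : ℤ) * ω := by
  simp only [map_add, map_mul, map_intCast, conj_ω]; push_cast; ring

lemma norm_rep (a b : ℤ) :
    ((a : O) + b * ω) * conj ((a : O) + b * ω) = ((a * a + a * b + b * b : ℤ) : O) := by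
  rw [conj_rep]; push_cast
  linear_combination (-(b : O) * b) * ω_sq

lemma conj_conj (c : O) : conj (conj c) = c := by
  obtain ⟨a, b, rfl⟩ := rep c
  rw [conj_rep, conj_rep]; push_cast; ring

lemma norm_int (c : O) : ∃ n : ℤ, c * conj c = n := by
  obtain ⟨a, b, rfl⟩ := rep c
  exact ⟨_, norm_rep a b⟩

lemma norm_zero {c : O} (h : c * conj c = 0) : c = 0 := by
  rcases mul_eq_zero.1 h with h | h
  · exact h
  · rw [← conj_conj c, h, map_zero]

lemma diag {s c : O} (h : conj s = s) (hc : s = θ * c) : ∃ k : ℤ, s = 3 * k := by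
  obtain ⟨a, b, rfl⟩ := rep c
  subst hc
  rw [map_mul, conj_θ, conj_rep] at h
  have e : θ * ((a : O) + b * ω) = ((-a - 2 * b : ℤ) : O) + ((2 * a + b : ℤ) : O) * ω := by
    rw [θ_eq]; push_cast; linear_combination 2 * (b : O) * ω_sq
  have e' : -θ * (((a + b : ℤ) : O) + ((-b : ℤ) : O) * ω)
      = ((a - b : ℤ) : O) + ((-2 * a - b : ℤ) : O) * ω := by
    rw [θ_eq]; push_cast; linear_combination 2 * (b : O) * ω_sq
  rw [e, e'] at h
  have h2 := inj h
  refine ⟨a, ?_⟩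
  rw [e]
  have : b = -2 * a := by omega
  subst this
  push_cast; ring

lemma two_dvd {c : O} {n : ℤ} (h : c * conj c = 2 * n) : ∃ d, c = 2 * d := by
  obtain ⟨a, b, rfl⟩ := rep c
  rw [norm_rep] at h
  have h : a * a + a * b + b * b = 2 * n := by exact_mod_cast h
  have : a % 2 = 0 ∧ b % 2 = 0 := by
    have h2 := congrArg (· % 2) h
    rcases Int.emod_two_eq_zero_or_one a with ha | ha <;>
    rcases Int.emod_two_eq_zero_or_one b with hb | hb <;>
    simp [Int.add_emod, Int.mul_emod, ha, hb] at h2 ⊢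
  obtain ⟨a', rfl⟩ : (2 : ℤ) ∣ a := by omega
  obtain ⟨b', rfl⟩ : (2 : ℤ) ∣ b := by omega
  exact ⟨a' + b' * ω, by push_cast; ring⟩

lemma five_dvd {c : O} {n : ℤ} (h : c * conj c = 5 * n) : ∃ d, c = 5 * d := by
  obtain ⟨a, b, rfl⟩ := rep c
  rw [norm_rep] at h
  have h : a * a + a * b + b * b = 5 * n := by exact_mod_cast h
  have : a % 5 = 0 ∧ b % 5 = 0 := by
    have h2 := congrArg (· % 5) h
    have ha : a % 5 = 0 ∨ a % 5 = 1 ∨ a % 5 = 2 ∨ a % 5 = 3 ∨ a % 5 = 4 := by omega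
    have hb : b % 5 = 0 ∨ b % 5 = 1 ∨ b % 5 = 2 ∨ b % 5 = 3 ∨ b % 5 = 4 := by omega
    rcases ha with ha | ha | ha | ha | ha <;>
    rcases hb with hb | hb | hb | hb | hb <;>
    simp [Int.add_emod, Int.mul_emod, ha, hb] at h2 ⊢
  obtain ⟨a', rfl⟩ : (5 : ℤ) ∣ a := by omega
  obtain ⟨b', rfl⟩ : (5 : ℤ) ∣ b := by omega
  exact ⟨a' + b' * ω, by push_cast; ring⟩

/-- residues modulo `θ`, with the norm recorded modulo 3. -/
lemma mod_θ (c : O) : (∃ d, c = θ * d) ∧ (∃ k : ℤ, c * conj c = 3 * k) ∨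
    ((∃ d, c = θ * d + 1) ∨ (∃ d, c = θ * d - 1)) ∧ (∃ k : ℤ, c * conj c = 3 * k + 1) := by
  obtain ⟨a, b, rfl⟩ := rep c
  rw [norm_rep]
  have e : ∀ r k : ℤ, a - b = 3 * k + r →
      (a : O) + b * ω = θ * (((k + b : ℤ) : O) + ((b - 2 * (k + b) : ℤ) : O) * ω) + r := by
    intro r k h
    obtain rfl : a = 3 * k + r + b := by omega
    rw [θ_eq]; push_cast
    linear_combination (2 * b + 4 * k : O) * ω_sq
  have h : (a - b) % 3 = 0 ∨ (a - b) % 3 = 1 ∨ (a - b) % 3 = 2 := by omega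
  rcases h with h | h | h
  · left
    have hk : a - b = 3 * ((a - b) / 3) + 0 := by omega
    refine ⟨⟨_, (e 0 _ hk).trans (by push_cast; rw [add_zero])⟩, ?_⟩
    generalize (a - b) / 3 = k at hk
    obtain rfl : a = 3 * k + b := by omega
    exact ⟨3 * k * k + 3 * k * b + b * b, by push_cast; ring⟩
  · right
    have hk : a - b = 3 * ((a - b) / 3) + 1 := by omega
    refine ⟨Or.inl ⟨_, (e 1 _ hk).trans (by push_cast; rfl)⟩, ?_⟩
    generalize (a - b) / 3 = k at hk
    obtain rfl : a = 3 * k + 1 + b := by omega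
    exact ⟨3 * k * k + 2 * k + 3 * k * b + b * b + b, by push_cast; ring⟩
  · right
    have hk : a - b = 3 * ((a - b) / 3 + 1) + -1 := by omega
    refine ⟨Or.inr ⟨_, (e (-1) _ hk).trans (by push_cast; exact (sub_eq_add_neg _ _).symm)⟩, ?_⟩
    generalize (a - b) / 3 + 1 = k at hk
    obtain rfl : a = 3 * k + -1 + b := by omega
    exact ⟨3 * k * k - 2 * k + 3 * k * b + b * b - b, by push_cast; ring⟩

lemma unit_exists {c : O} {n : ℤ} (h0 : c ≠ 0) (h : c * conj c = n) (hn : n ≤ 6) :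
    ∃ u, u * conj u = 1 ∧ (u * c = -1 ∨ u * c = -θ ∨ u * c = 1 - θ) := by
  obtain ⟨a, b, rfl⟩ := rep c
  rw [norm_rep] at h
  have h : a * a + a * b + b * b = n := by exact_mod_cast h
  have ha1 : a ≤ 2 := by nlinarith [sq_nonneg (a + 2 * b)]
  have ha2 : -2 ≤ a := by nlinarith [sq_nonneg (a + 2 * b)]
  have hb1 : b ≤ 2 := by nlinarith [sq_nonneg (b + 2 * a)]
  have hb2 : -2 ≤ b := by nlinarith [sq_nonneg (b + 2 * a)]
  have e : ∀ x y p q : ℤ, x * a - y * b = p → x * b + y * a + y * b = q →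
      ((x : O) + y * ω) * (a + b * ω) = p + q * ω := by
    intro x y p q h1 h2
    rw [← h1, ← h2]; push_cast; linear_combination (y * b : O) * ω_sq
  have key : (a = 0 ∧ b = 0) ∨ ∃ x ∈ Finset.Icc (-1 : ℤ) 1, ∃ y ∈ Finset.Icc (-1 : ℤ) 1,
      x * x + x * y + y * y = 1 ∧ ((x * a - y * b = -1 ∧ x * b + y * a + y * b = 0) ∨
      (x * a - y * b = 1 ∧ x * b + y * a + y * b = -2) ∨
      (x * a - y * b = 2 ∧ x * b + y * a + y * b = -2)) := by
    clear e h0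
    interval_cases a <;> interval_cases b <;> first | omega | decide
  rcases key with ⟨rfl, rfl⟩ | ⟨x, -, y, -, hu, hk⟩
  · simp at h0
  · refine ⟨x + y * ω, ?_, ?_⟩
    · rw [norm_rep, hu]; simp
    · rcases hk with ⟨h1, h2⟩ | ⟨h1, h2⟩ | ⟨h1, h2⟩
      · left; rw [e x y _ _ h1 h2]; simp
      · right; left; rw [e x y _ _ h1 h2, θ_eq]; push_cast; ring
      · right; right; rw [e x y _ _ h1 h2, θ_eq]; push_cast; ring

lemma θ_ne : θ ≠ 0 := by
  intro h
  have := θ_sq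
  rw [h] at this
  norm_num at this

structure Herm {M : Type*} [AddCommGroup M] [Module O M] (ψ : M → M → O) : Prop where
  add : ∀ x x' y, ψ (x + x') y = ψ x y + ψ x' y
  smul : ∀ (a : O) (x y : M), ψ (a • x) y = a * ψ x y
  herm : ∀ x y, ψ y x = conj (ψ x y)
  theta : ∀ x y, ∃ c : O, ψ x y = θ * c

section
variable {M : Type*} [AddCommGroup M] [Module O M] {ψ : M → M → O}

lemma Herm.add_right (H : Herm ψ) (x y y' : M) : ψ x (y + y') = ψ x y + ψ x y' := by
  rw [H.herm (y + y') x, H.add, map_add, ← H.herm, ← H.herm]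

lemma Herm.smul_right (H : Herm ψ) (a : O) (x y : M) : ψ x (a • y) = conj a * ψ x y := by
  rw [H.herm (a • y) x, H.smul, map_mul, ← H.herm]

lemma Herm.zero_left (H : Herm ψ) (y : M) : ψ 0 y = 0 := by
  have := H.smul 0 0 y
  simpa using this

lemma Herm.diag (H : Herm ψ) (x : M) : ∃ k : ℤ, ψ x x = 3 * k := by
  obtain ⟨c, hc⟩ := H.theta x x
  exact Eis.diag (H.herm x x).symm hc

/-- nondegeneracy of the Gram matrix. -/
lemma Herm.indep (H : Herm ψ) {e f : M} (hd : ψ e e * ψ f f - ψ e f * ψ f e ≠ 0) {a b : O}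
    (h1 : a * ψ e e + b * ψ f e = 0) (h2 : a * ψ e f + b * ψ f f = 0) : a = 0 ∧ b = 0 := by
  constructor
  · apply (mul_eq_zero.1 (?_ : a * (ψ e e * ψ f f - ψ e f * ψ f e) = 0)).resolve_right hd
    linear_combination ψ f f * h1 - ψ f e * h2
  · apply (mul_eq_zero.1 (?_ : b * (ψ e e * ψ f f - ψ e f * ψ f e) = 0)).resolve_right hd
    linear_combination ψ e e * h2 - ψ e f * h1

lemma Herm.linInd (H : Herm ψ) {e f : M} (hd : ψ e e * ψ f f - ψ e f * ψ f e ≠ 0) :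
    LinearIndependent O ![e, f] := by
  rw [LinearIndependent.pair_iff]
  intro a b h
  apply H.indep hd
  · rw [← H.smul, ← H.smul, ← H.add, h, H.zero_left]
  · rw [← H.smul, ← H.smul, ← H.add, h, H.zero_left]

variable [Module.Free O M] [Module.Finite O M]

lemma cancel {a : O} (ha : a ≠ 0) {x y : M} (h : a • x = a • y) : x = y := by
  have h0 : a • (x - y) = 0 := by rw [smul_sub, h, sub_self]
  exact sub_eq_zero.1 ((smul_eq_zero.1 h0).resolve_left ha)

lemma Herm.perp (H : Herm ψ) (hr : Module.finrank O M = 2) {e f w : M}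
    (hd : ψ e e * ψ f f - ψ e f * ψ f e ≠ 0) (h1 : ψ w e = 0) (h2 : ψ w f = 0) : w = 0 := by
  have hn : ¬ LinearIndependent O ![w, e, f] := by
    intro h
    have := h.fintype_card_le_finrank
    rw [hr] at this
    simp at this
  rw [Fintype.not_linearIndependent_iff] at hn
  obtain ⟨g, hg, i, hi⟩ := hn
  simp only [Fin.sum_univ_three, Matrix.cons_val] at hg
  have h0 : g 1 = 0 ∧ g 2 = 0 := by
    apply H.indep hd
    · have := congrArg (fun v => ψ v e) hg
      simp only [H.add, H.smul, h1, H.zero_left] at this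
      linear_combination this
    · have := congrArg (fun v => ψ v f) hg
      simp only [H.add, H.smul, h2, H.zero_left] at this
      linear_combination this
  rw [h0.1, h0.2, zero_smul, zero_smul, add_zero, add_zero] at hg
  refine (smul_eq_zero.1 hg).resolve_left ?_
  intro h
  apply hi
  fin_cases i
  · exact h
  · exact h0.1
  · exact h0.2

lemma Herm.solve (H : Herm ψ) (hr : Module.finrank O M = 2) {e f m : M}
    (hd : ψ e e * ψ f f - ψ e f * ψ f e ≠ 0) (d P Q : O)
    (h1 : d * ψ m e = P * ψ e e + Q * ψ f e) (h2 : d * ψ m f = P * ψ e f + Q * ψ f f) :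
    d • m = P • e + Q • f := by
  have : d • m + (-1 : O) • (P • e + Q • f) = 0 := by
    apply H.perp hr hd
    · simp only [H.add, H.smul]; linear_combination h1
    · simp only [H.add, H.smul]; linear_combination h2
  rw [neg_one_smul] at this
  exact add_neg_eq_zero.1 this

lemma Herm.nrm (H : Herm ψ) {e f m : M} {d P Q : O} (h : d • m = P • e + Q • f) :
    d * conj d * ψ m m = P * conj P * ψ e e + P * conj Q * ψ e f + Q * conj P * ψ f e
      + Q * conj Q * ψ f f := by
  have := congrArg (fun v => ψ v v) h
  simp only [H.add, H.smul, H.add_right, H.smul_right] at this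
  linear_combination this

lemma mem_pair {e f m : M} (a b : O) (h : m = a • e + b • f) : m ∈ Submodule.span O {e, f} :=
  Submodule.mem_span_pair.2 ⟨a, b, h.symm⟩

lemma Herm.typeA (H : Herm ψ) (hr : Module.finrank O M = 2) {e f : M}
    (h11 : ψ e e = 3) (h12 : ψ e f = θ) (h21 : ψ f e = -θ) (h22 : ψ f f = 3) :
    LinearIndependent O ![e, f] ∧ Submodule.span O {e, f} = ⊤ := by
  have hd : ψ e e * ψ f f - ψ e f * ψ f e ≠ 0 := by
    rw [h11, h12, h21, h22, mul_neg, θ_sq]; norm_num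
  refine ⟨H.linInd hd, ?_⟩
  rw [eq_top_iff]
  intro m _
  obtain ⟨c1, hc1⟩ := H.theta m e
  obtain ⟨c2, hc2⟩ := H.theta m f
  have hs := H.solve hr (m := m + c1 • f) hd 2 (θ * c1 - c2) (-θ * (θ * c1 - c2))
    (by rw [H.add, H.smul, hc1, h11, h21]
        linear_combination (c2 - θ * c1) * θ_sq)
    (by rw [H.add, H.smul, hc2, h12, h22]
        linear_combination (2 * c1) * θ_sq)
  have hn := H.nrm hs
  obtain ⟨k, hk⟩ := H.diag (m + c1 • f)
  rw [hk, h11, h12, h21, h22] at hn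
  simp only [map_mul, map_neg, map_ofNat, conj_θ] at hn
  generalize hP : θ * c1 - c2 = P at *
  have hn' : P * conj P = 2 * k := by
    have h6 : (6 : O) ≠ 0 := by norm_num
    apply mul_left_cancel₀ h6
    linear_combination -hn + P * conj P * θ_sq
  obtain ⟨P', rfl⟩ := two_dvd hn'
  have := cancel (x := m + c1 • f) (y := P' • e + (-θ * P') • f) (two_ne_zero (α := O))
    (by rw [hs]; module)
  exact mem_pair P' (-θ * P' - c1) (by rw [← sub_eq_zero] at this ⊢; rw [← this]; module)

lemma Herm.typeC (H : Herm ψ) (hr : Module.finrank O M = 2) {e f : M}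
    (h11 : ψ e e = 6) (h12 : ψ e f = θ) (h21 : ψ f e = -θ) (h22 : ψ f f = 3) :
    LinearIndependent O ![e, f] ∧ Submodule.span O {e, f} = ⊤ := by
  have hd : ψ e e * ψ f f - ψ e f * ψ f e ≠ 0 := by
    rw [h11, h12, h21, h22, mul_neg, θ_sq]; norm_num
  refine ⟨H.linInd hd, ?_⟩
  rw [eq_top_iff]
  intro m _
  obtain ⟨c1, hc1⟩ := H.theta m e
  obtain ⟨c2, hc2⟩ := H.theta m f
  have hs := H.solve hr (m := m + c1 • f) hd 5 (θ * c1 - c2) (-2 * θ * (θ * c1 - c2))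
    (by rw [H.add, H.smul, hc1, h11, h21]
        linear_combination (-2 * (θ * c1 - c2)) * θ_sq)
    (by rw [H.add, H.smul, hc2, h12, h22]
        linear_combination (5 * c1) * θ_sq)
  have hn := H.nrm hs
  obtain ⟨k, hk⟩ := H.diag (m + c1 • f)
  rw [hk, h11, h12, h21, h22] at hn
  simp only [map_mul, map_neg, map_ofNat, conj_θ] at hn
  generalize hP : θ * c1 - c2 = P at *
  obtain ⟨n, hN⟩ := norm_int P
  have hn' : 75 * k = 30 * n := by
    have : (75 : O) * k = 30 * n := by
      linear_combination hn + (30 + 0) * hN - 8 * P * conj P * θ_sq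
    exact_mod_cast this
  obtain ⟨P', rfl⟩ := five_dvd (c := P) (n := n / 5) (by
    rw [hN]
    have : n = 5 * (n / 5) := by omega
    exact_mod_cast this)
  have := cancel (x := m + c1 • f) (y := P' • e + (-2 * θ * P') • f)
    (by norm_num : (5 : O) ≠ 0) (by rw [hs]; module)
  exact mem_pair P' (-2 * θ * P' - c1) (by rw [← sub_eq_zero] at this ⊢; rw [← this]; module)

lemma Herm.typeB (H : Herm ψ) (hr : Module.finrank O M = 2) {e f : M}
    (h11 : ψ e e = 3) (h12 : ψ e f = 0) (h21 : ψ f e = 0) (h22 : ψ f f = 3) :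
    LinearIndependent O ![e, f] ∧ Submodule.span O {e, f} = ⊤ := by
  have hd : ψ e e * ψ f f - ψ e f * ψ f e ≠ 0 := by
    rw [h11, h12, h21, h22]; norm_num
  refine ⟨H.linInd hd, ?_⟩
  rw [eq_top_iff]
  intro m _
  obtain ⟨c1, hc1⟩ := H.theta m e
  obtain ⟨c2, hc2⟩ := H.theta m f
  have hs := H.solve hr (m := m) hd θ (-c1) (-c2)
    (by rw [hc1, h11, h21]; linear_combination c1 * θ_sq)
    (by rw [hc2, h12, h22]; linear_combination c2 * θ_sq)
  have hn := H.nrm hs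
  obtain ⟨k, hk⟩ := H.diag m
  rw [hk, h11, h12, h21, h22] at hn
  simp only [map_neg, conj_θ] at hn
  have hn' : c1 * conj c1 + c2 * conj c2 = 3 * k := by
    have h3 : (3 : O) ≠ 0 := by norm_num
    apply mul_left_cancel₀ h3
    linear_combination -hn - 3 * k * θ_sq
  rcases mod_θ c1 with ⟨⟨d1, hd1⟩, k1, hk1⟩ | ⟨-, k1, hk1⟩ <;>
  rcases mod_θ c2 with ⟨⟨d2, hd2⟩, k2, hk2⟩ | ⟨-, k2, hk2⟩ <;> rw [hk1, hk2] at hn'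
  · have := cancel (x := m) (y := (-d1) • e + (-d2) • f) θ_ne (by rw [hs, hd1, hd2]; module)
    exact mem_pair _ _ this
  · have : 3 * k1 + (3 * k2 + 1) = 3 * k := by exact_mod_cast hn'
    omega
  · have : 3 * k1 + 1 + 3 * k2 = 3 * k := by exact_mod_cast hn'
    omega
  · have : 3 * k1 + 1 + (3 * k2 + 1) = 3 * k := by exact_mod_cast hn'
    omega

lemma Herm.typeD (H : Herm ψ) (hr : Module.finrank O M = 2) {e f : M}
    (h11 : ψ e e = 6) (h12 : ψ e f = 0) (h21 : ψ f e = 0) (h22 : ψ f f = 3) :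
    LinearIndependent O ![e, f] ∧ ∀ m, ∃ P Q : O, ∃ k : ℤ, θ • m = P • e + Q • f ∧
      2 * (P * conj P) + Q * conj Q = 3 * k := by
  have hd : ψ e e * ψ f f - ψ e f * ψ f e ≠ 0 := by
    rw [h11, h12, h21, h22]; norm_num
  refine ⟨H.linInd hd, ?_⟩
  intro m
  obtain ⟨c1, hc1⟩ := H.theta m e
  obtain ⟨c2, hc2⟩ := H.theta m f
  have hs := H.solve hr (m := m) hd (2 * θ) (-c1) (-2 * c2)
    (by rw [hc1, h11, h21]; linear_combination 2 * c1 * θ_sq)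
    (by rw [hc2, h12, h22]; linear_combination 2 * c2 * θ_sq)
  have hn := H.nrm hs
  obtain ⟨k, hk⟩ := H.diag m
  rw [hk, h11, h12, h21, h22] at hn
  simp only [map_neg, map_mul, map_ofNat, conj_θ] at hn
  obtain ⟨n2, hN2⟩ := norm_int c2
  have hn' : c1 * conj c1 = 2 * ((3 * k - n2 : ℤ) : O) := by
    have h3 : (6 : O) ≠ 0 := by norm_num
    apply mul_left_cancel₀ h3
    push_cast
    linear_combination -hn - 12 * k * θ_sq - 12 * hN2
  obtain ⟨P, rfl⟩ := two_dvd hn'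
  refine ⟨-P, -c2, k, cancel (two_ne_zero (α := O)) ?_, ?_⟩
  · rw [smul_smul, hs]; module
  · have h3 : (2 : O) ≠ 0 := by norm_num
    apply mul_left_cancel₀ h3
    simp only [map_neg, map_mul, map_ofNat] at hn' ⊢
    push_cast at hn'
    linear_combination hn' + 2 * hN2

lemma Herm.typeD_over (H : Herm ψ) (hr : Module.finrank O M = 2) {e f : M}
    (h11 : ψ e e = 6) (h12 : ψ e f = 0) (h21 : ψ f e = 0) (h22 : ψ f f = 3)
    (hne : Submodule.span O {e, f} ≠ ⊤) :
    ∃ m₁ m₂ : M, Submodule.span O {m₁, m₂} = ⊤ ∧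
        LinearIndependent O ![m₁, m₂] ∧
        ψ m₁ m₁ = 3 ∧ ψ m₁ m₂ = θ ∧ ψ m₂ m₁ = -θ ∧ ψ m₂ m₂ = 3 := by
  have fin : ∀ (s : O) (m : M), conj s = s → s * s = 1 → θ • m = e + s • f →
      ∃ m₁ m₂ : M, Submodule.span O {m₁, m₂} = ⊤ ∧
        LinearIndependent O ![m₁, m₂] ∧
        ψ m₁ m₁ = 3 ∧ ψ m₁ m₂ = θ ∧ ψ m₂ m₁ = -θ ∧ ψ m₂ m₂ = 3 := by
    intro s m hs1 hs2 h
    have a1 : ψ (s • f) (s • f) = 3 := by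
      rw [H.smul, H.smul_right, hs1, h22]; linear_combination 3 * hs2
    have a2 : ψ m (s • f) = -θ := by
      apply mul_left_cancel₀ θ_ne
      rw [← H.smul, h, H.add, a1, H.smul_right, h12]
      linear_combination θ_sq
    have a3 : ψ (s • f) m = θ := by rw [H.herm, a2, map_neg, conj_θ, neg_neg]
    have a4 : ψ m m = 3 := by
      have hn := H.nrm (m := m) (d := θ) (P := 1) (Q := s) (e := e) (f := f) (by rw [h, one_smul])
      rw [h11, h12, h21, h22, conj_θ, hs1, map_one] at hn
      have h3 : (3 : O) ≠ 0 := by norm_num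
      apply mul_left_cancel₀ h3
      linear_combination hn + ψ m m * θ_sq + 3 * hs2
    obtain ⟨b1, b2⟩ := H.typeA hr a1 a3 a2 a4
    exact ⟨s • f, m, b2, b1, a1, a3, a2, a4⟩
  obtain ⟨m, hm⟩ : ∃ m, m ∉ Submodule.span O {e, f} := by
    by_contra! h
    exact hne (eq_top_iff.2 fun m _ => h m)
  obtain ⟨P, Q, k, hs, hn⟩ := (H.typeD hr h11 h12 h21 h22).2 m
  rcases mod_θ P with ⟨⟨d1, hd1⟩, k1, hk1⟩ | ⟨hP, k1, hk1⟩ <;>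
  rcases mod_θ Q with ⟨⟨d2, hd2⟩, k2, hk2⟩ | ⟨hQ, k2, hk2⟩ <;> rw [hk1, hk2] at hn
  · exfalso
    apply hm
    exact mem_pair d1 d2 (cancel θ_ne (by rw [hs, hd1, hd2]; module))
  · have : 2 * (3 * k1) + (3 * k2 + 1) = 3 * k := by exact_mod_cast hn
    omega
  · have : 2 * (3 * k1 + 1) + 3 * k2 = 3 * k := by exact_mod_cast hn
    omega
  · rcases hP with ⟨d1, hd1⟩ | ⟨d1, hd1⟩ <;> rcases hQ with ⟨d2, hd2⟩ | ⟨d2, hd2⟩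
    · refine fin 1 (m - d1 • e - d2 • f) (by simp) (by ring) ?_
      rw [smul_sub, smul_sub, hs, hd1, hd2]; module
    · refine fin (-1) (m - d1 • e - d2 • f) (by simp) (by ring) ?_
      rw [smul_sub, smul_sub, hs, hd1, hd2]; module
    · refine fin (-1) (-(m - d1 • e - d2 • f)) (by simp) (by ring) ?_
      rw [smul_neg, smul_sub, smul_sub, hs, hd1, hd2]; module
    · refine fin 1 (-(m - d1 • e - d2 • f)) (by simp) (by ring) ?_
      rw [smul_neg, smul_sub, smul_sub, hs, hd1, hd2]; module

lemma Herm.typeD_perp (H : Herm ψ) (hr : Module.finrank O M = 2) {e f y : M}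
    (h11 : ψ e e = 6) (h12 : ψ e f = 0) (h21 : ψ f e = 0) (h22 : ψ f f = 3)
    (hy : ψ y e = 0) : y ∈ Submodule.span O {e, f} := by
  obtain ⟨P, Q, k, hs, hn⟩ := (H.typeD hr h11 h12 h21 h22).2 y
  have hP : P = 0 := by
    have := congrArg (fun v => ψ v e) hs
    simp only [H.add, H.smul, hy, h11, h21, mul_zero, add_zero] at this
    exact (mul_eq_zero.1 this.symm).resolve_right (by norm_num)
  subst hP
  rcases mod_θ Q with ⟨⟨d2, hd2⟩, k2, hk2⟩ | ⟨hQ, k2, hk2⟩ <;>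
    rw [hk2, zero_mul, mul_zero, zero_add] at hn
  · exact mem_pair 0 d2 (cancel θ_ne (by rw [hs, hd2]; module))
  · have : (3 * k2 + 1) = 3 * k := by exact_mod_cast hn
    omega

end

end Eis

/-- Let `L` be a positive definite 𝒪-lattice of rank two containing a
6-vector `z` and spanned as an 𝒪-module by `z` together with the 3-vectors of `L`.
Then `L` has an 𝒪-basis `(e₁, e₂)` for which exactly one of the four cases
`δ₆, δ₉, δ₁₅, δ₁₈` holds (`z = e₁ + e₂` with Gram matrix `[[3,θ],[−θ,3]]` resp.
`[[3,0],[0,3]]`, or `z = e₁` with Gram matrix `[[6,θ],[−θ,3]]` resp. `[[6,0],[0,3]]`,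
of discriminants `6, 9, 15, 18`).  Moreover, if `L` is a *proper* 𝒪-submodule of a
rank-two 𝒪-lattice `M` with the same Hermitian form, then `L` is of type `δ₁₈` and `M`
is isomorphic to the lattice of type `δ₆`.  (Here `L` is realized as a submodule of an
ambient rank-two 𝒪-lattice `M`; taking `L = M` recovers the first assertion for an
arbitrary such `L`.) -/
theorem statement10 (M : Type*) [AddCommGroup M] [Module O M]
    [Module.Free O M] [Module.Finite O M]
    (hMrank : Module.finrank O M = 2)
    (ψ : M → M → O)
    (hψ_add : ∀ x x' y, ψ (x + x') y = ψ x y + ψ x' y)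
    (hψ_smul : ∀ (a : O) (x y : M), ψ (a • x) y = a * ψ x y)
    (hψ_herm : ∀ x y, ψ y x = conj (ψ x y))
    (hψ_theta : ∀ x y, ∃ c : O, ψ x y = θ * c)
    (L : Submodule O M)
    (hLrank : Module.finrank O ↥L = 2)
    (hLpos : ∀ x ∈ L, x ≠ 0 → ∃ n : ℕ, 0 < n ∧ ψ x x = (n : O))
    (z : M) (hzL : z ∈ L) (hz6 : ψ z z = 6)
    (hspan : Submodule.span O ({z} ∪ {x : M | x ∈ L ∧ ψ x x = 3}) = L) :
    (∃ e₁ e₂ : M, e₁ ∈ L ∧ e₂ ∈ L ∧ Submodule.span O {e₁, e₂} = L ∧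
      LinearIndependent O ![e₁, e₂] ∧
      (let A :=
        z = e₁ + e₂ ∧ ψ e₁ e₁ = 3 ∧ ψ e₁ e₂ = θ ∧ ψ e₂ e₁ = -θ ∧ ψ e₂ e₂ = 3
       let B :=
        z = e₁ + e₂ ∧ ψ e₁ e₁ = 3 ∧ ψ e₁ e₂ = 0 ∧ ψ e₂ e₁ = 0 ∧ ψ e₂ e₂ = 3
       let C :=
        z = e₁ ∧ ψ e₁ e₁ = 6 ∧ ψ e₁ e₂ = θ ∧ ψ e₂ e₁ = -θ ∧ ψ e₂ e₂ = 3
       let D :=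
        z = e₁ ∧ ψ e₁ e₁ = 6 ∧ ψ e₁ e₂ = 0 ∧ ψ e₂ e₁ = 0 ∧ ψ e₂ e₂ = 3
       (A ∨ B ∨ C ∨ D) ∧
       ¬(A ∧ B) ∧ ¬(A ∧ C) ∧ ¬(A ∧ D) ∧ ¬(B ∧ C) ∧ ¬(B ∧ D) ∧ ¬(C ∧ D))) ∧
    (L ≠ ⊤ →
      (∃ e₁ e₂ : M, e₁ ∈ L ∧ e₂ ∈ L ∧ Submodule.span O {e₁, e₂} = L ∧
        LinearIndependent O ![e₁, e₂] ∧
        z = e₁ ∧ ψ e₁ e₁ = 6 ∧ ψ e₁ e₂ = 0 ∧ ψ e₂ e₁ = 0 ∧ ψ e₂ e₂ = 3) ∧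
      (∃ m₁ m₂ : M, Submodule.span O {m₁, m₂} = ⊤ ∧
        LinearIndependent O ![m₁, m₂] ∧
        ψ m₁ m₁ = 3 ∧ ψ m₁ m₂ = θ ∧ ψ m₂ m₁ = -θ ∧ ψ m₂ m₂ = 3)) := by
  have H : Eis.Herm ψ := ⟨hψ_add, hψ_smul, hψ_herm, hψ_theta⟩
  have e36 : (3 : O) ≠ 6 := by norm_num
  have e0 := Eis.θ_ne
  have ex : ∀ e₁ e₂ : M, 
      (let A :=
        z = e₁ + e₂ ∧ ψ e₁ e₁ = 3 ∧ ψ e₁ e₂ = θ ∧ ψ e₂ e₁ = -θ ∧ ψ e₂ e₂ = 3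
       let B :=
        z = e₁ + e₂ ∧ ψ e₁ e₁ = 3 ∧ ψ e₁ e₂ = 0 ∧ ψ e₂ e₁ = 0 ∧ ψ e₂ e₂ = 3
       let C :=
        z = e₁ ∧ ψ e₁ e₁ = 6 ∧ ψ e₁ e₂ = θ ∧ ψ e₂ e₁ = -θ ∧ ψ e₂ e₂ = 3
       let D :=
        z = e₁ ∧ ψ e₁ e₁ = 6 ∧ ψ e₁ e₂ = 0 ∧ ψ e₂ e₁ = 0 ∧ ψ e₂ e₂ = 3
       ¬(A ∧ B) ∧ ¬(A ∧ C) ∧ ¬(A ∧ D) ∧ ¬(B ∧ C) ∧ ¬(B ∧ D) ∧ ¬(C ∧ D)) := by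
    intro e₁ e₂
    refine ⟨?_, ?_, ?_, ?_, ?_, ?_⟩ <;> rintro ⟨⟨-, h1, h2, -⟩, -, h3, h4, -⟩
    · exact e0 (h2.symm.trans h4)
    · exact e36 (h1.symm.trans h3)
    · exact e36 (h1.symm.trans h3)
    · exact e36 (h1.symm.trans h3)
    · exact e36 (h1.symm.trans h3)
    · exact e0 (h2.symm.trans h4)
  by_cases hI : ∃ x ∈ L, ψ x x = 3 ∧ ψ x z ≠ 0
  · obtain ⟨x, hxL, hx3, hxz⟩ := hI
    obtain ⟨c, hc⟩ := hψ_theta x z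
    have hzx : ψ z x = -θ * conj c := by
      rw [hψ_herm x z, hc, map_mul, Eis.conj_θ]
    have hc0 : c ≠ 0 := by
      rintro rfl
      exact hxz (by rw [hc, mul_zero])
    obtain ⟨n, hn⟩ := Eis.norm_int c
    have hn6 : n ≤ 6 := by
      have hv : (3 : O) • z + (-ψ z x) • x ∈ L :=
        L.add_mem (L.smul_mem _ hzL) (L.smul_mem _ hxL)
      have hp : ∃ k : ℕ, ψ ((3 : O) • z + (-ψ z x) • x) ((3 : O) • z + (-ψ z x) • x) = (k : O) := by
        by_cases h0 : (3 : O) • z + (-ψ z x) • x = 0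
        · exact ⟨0, by rw [h0, H.zero_left]; simp⟩
        · obtain ⟨k, -, hk⟩ := hLpos _ hv h0
          exact ⟨k, hk⟩
      obtain ⟨k, hk⟩ := hp
      simp only [H.add, H.smul, H.add_right, H.smul_right, map_neg, ← hψ_herm z x, hz6, hx3,
        map_ofNat] at hk
      rw [hzx, hc] at hk
      have : (54 : O) - 9 * n = k := by
        linear_combination hk + 9 * hn - 3 * c * conj c * Eis.θ_sq
      have : (54 : ℤ) - 9 * n = k := by exact_mod_cast this
      omega
    obtain ⟨u, hu1, hu⟩ := Eis.unit_exists hc0 hn hn6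
    have hy3 : ψ (u • x) (u • x) = 3 := by
      rw [H.smul, H.smul_right, hx3]; linear_combination 3 * hu1
    have hyz : ψ (u • x) z = θ * (u * c) := by
      rw [H.smul, hc]; ring
    have hyL : u • x ∈ L := L.smul_mem _ hxL
    generalize u • x = y at hy3 hyz hyL
    have hzy : ψ z y = conj (ψ y z) := hψ_herm y z
    have hL : ∀ e₁ e₂ : M, e₁ ∈ L → e₂ ∈ L → Submodule.span O {e₁, e₂} = ⊤ → L = ⊤ := by
      intro e₁ e₂ h1 h2 h
      rw [eq_top_iff, ← h, Submodule.span_le]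
      rintro v (rfl | rfl)
      · exact h1
      · exact h2
    have q : z - y = z + (-1 : O) • y := by module
    rcases hu with hu | hu | hu
    · have h21 : ψ y z = -θ := by rw [hyz, hu]; ring
      have h12 : ψ z y = θ := by rw [hzy, h21, map_neg, Eis.conj_θ, neg_neg]
      obtain ⟨b1, b2⟩ := H.typeC hMrank hz6 h12 h21 hy3
      have hT := hL _ _ hzL hyL b2
      exact ⟨⟨z, y, hzL, hyL, b2.trans hT.symm, b1,
        Or.inr (Or.inr (Or.inl ⟨rfl, hz6, h12, h21, hy3⟩)), ex z y⟩, fun h => absurd hT h⟩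
    · have g : ψ y z = 3 := by rw [hyz, hu]; linear_combination -Eis.θ_sq
      have g' : ψ z y = 3 := by rw [hzy, g, map_ofNat]
      have h12 : ψ y (z - y) = 0 := by
        rw [q, H.add_right, H.smul_right, g, hy3, map_neg, map_one]; ring
      have h21 : ψ (z - y) y = 0 := by
        rw [q, H.add, H.smul, g', hy3]; ring
      have h22 : ψ (z - y) (z - y) = 3 := by
        rw [q]
        simp only [H.add, H.add_right, H.smul, H.smul_right, g, g', hy3, hz6, map_neg, map_one]
        ring
      obtain ⟨b1, b2⟩ := H.typeB hMrank hy3 h12 h21 h22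
      have hwL := L.sub_mem hzL hyL
      have hT := hL _ _ hyL hwL b2
      exact ⟨⟨y, z - y, hyL, hwL, b2.trans hT.symm, b1,
        Or.inr (Or.inl ⟨by abel, hy3, h12, h21, h22⟩), ex _ _⟩, fun h => absurd hT h⟩
    · have g : ψ y z = 3 + θ := by rw [hyz, hu]; linear_combination -Eis.θ_sq
      have g' : ψ z y = 3 - θ := by rw [hzy, g, map_add, Eis.conj_θ, map_ofNat]; ring
      have h12 : ψ y (z - y) = θ := by
        rw [q, H.add_right, H.smul_right, g, hy3, map_neg, map_one]; ring
      have h21 : ψ (z - y) y = -θ := by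
        rw [q, H.add, H.smul, g', hy3]; ring
      have h22 : ψ (z - y) (z - y) = 3 := by
        rw [q]
        simp only [H.add, H.add_right, H.smul, H.smul_right, g, g', hy3, hz6, map_neg, map_one]
        ring
      obtain ⟨b1, b2⟩ := H.typeA hMrank hy3 h12 h21 h22
      have hwL := L.sub_mem hzL hyL
      have hT := hL _ _ hyL hwL b2
      exact ⟨⟨y, z - y, hyL, hwL, b2.trans hT.symm, b1,
        Or.inl ⟨by abel, hy3, h12, h21, h22⟩, ex _ _⟩, fun h => absurd hT h⟩
  · push Not at hI
    obtain ⟨x, hxL, hx3⟩ : ∃ x ∈ L, ψ x x = 3 := by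
      by_contra! h
      have he : {x : M | x ∈ L ∧ ψ x x = 3} = ∅ := by
        ext v
        simp only [Set.mem_setOf_eq, Set.mem_empty_iff_false, iff_false, not_and]
        exact h v
      rw [he, Set.union_empty] at hspan
      have h1 : Module.finrank O (Submodule.span O ({z} : Set M)) ≤ 1 := by
        have := finrank_span_le_card (R := O) ({z} : Set M)
        simpa using this
      rw [hspan, hLrank] at h1
      omega
    have h21 : ψ x z = 0 := hI x hxL hx3
    have h12 : ψ z x = 0 := by rw [hψ_herm x z, h21, map_zero]
    have b1 := (H.typeD hMrank hz6 h12 h21 hx3).1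
    have b2 : Submodule.span O {z, x} = L := by
      apply le_antisymm
      · rw [Submodule.span_le]
        rintro v (rfl | rfl)
        · exact hzL
        · exact hxL
      · conv_lhs => rw [← hspan]
        rw [Submodule.span_le]
        rintro v (rfl | ⟨hv, hv3⟩)
        · exact Submodule.subset_span (by simp)
        · exact H.typeD_perp hMrank hz6 h12 h21 hx3 (hI v hv hv3)
    refine ⟨⟨z, x, hzL, hxL, b2, b1,
      Or.inr (Or.inr (Or.inr ⟨rfl, hz6, h12, h21, hx3⟩)), ex z x⟩, fun h => ⟨?_, ?_⟩⟩
    · exact ⟨z, x, hzL, hxL, b2, b1, rfl, hz6, h12, h21, hx3⟩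
    · exact H.typeD_over hMrank hz6 h12 h21 hx3 (by rw [b2]; exact h)

end
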